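/- Let a, n, b, p, k be positive integers with a > b. Suppose there exist a b-WS-template A₁, …, A_{n+1} with width a and n + 1 colors (with special subset A_{n+1}) and a partition of {1, …, p} into k sum-free subsets. Then there exists a partition of {1, …, pa + b} into n + k weakly sum-free subsets. -/

import Mathlib

/-!
Lay out `{1, …, pa + b}` in `p` rows: row `0` is `{1, …, a + b}`, and each later row is a block of
`a` consecutive integers, so every `z` is `row z * a + col z` with `1 ≤ col z ≤ a + b`, and
`b < col z` outside row `0`. Colour `z` by the template colour of `col z`, except that when this
colour is the special one, `z` takes the colour of `row z + 1` in the sum-free partition of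
`{1, …, p}`.

For `x ≠ y` with columns `u, v`, the cell of `x + y` depends on the size of `u + v`
(`cell_add_low`, `cell_add_mid`, `cell_add_high`).
* If `u + v ≤ a + b`, the column of `x + y` is `u + v`, and the template colour class does not
  contain it: it is weakly sum-free when `u ≠ v`, and when `u = v` the two numbers lie in
  different rows, so `u > b` and sum-freeness outside `{1, …, b}` applies.
* If `u + v > a + b` and the colour is ordinary, the column is `π_{a,b}(u + v)`, which is excluded.
* If `a + b < u + v ≤ 2a + b` and the colour is special, the one-based row indices add up, and
  sum-freeness of the partition of `{1, …, p}` applies.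
* If `u + v > 2a + b` and the colour is special, the column is `u + v - 2a`, which is excluded.
-/

/-- A set of natural numbers is sum-free: for all `a b ∈ A` (not necessarily
distinct), `a + b ∉ A`. -/
def SumFree (A : Set ℕ) : Prop := ∀ a ∈ A, ∀ b ∈ A, a + b ∉ A

/-- A set of natural numbers is weakly sum-free: for all `a b ∈ A` with
`a ≠ b`, `a + b ∉ A`. -/
def WeaklySumFree (A : Set ℕ) : Prop := ∀ a ∈ A, ∀ b ∈ A, a ≠ b → a + b ∉ A

/-- `A 0, …, A (n-1)` is a partition of `{1, …, p}`. -/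
def IsPartition {n : ℕ} (p : ℕ) (A : Fin n → Set ℕ) : Prop :=
  (∀ i j, i ≠ j → Disjoint (A i) (A j)) ∧ (⋃ i, A i) = Set.Icc 1 p

/-- An S-template with width `q` and `n` colors: a partition of `{1, …, q}`
into `n` sum-free subsets such that every subset except the last (special)
one satisfies: if `x, y` belong to it and `x + y > q`, then `x + y - q` does
not belong to it. -/
def IsSTemplate {n : ℕ} (q : ℕ) (A : Fin n → Set ℕ) : Prop :=
  IsPartition q A ∧ (∀ i, SumFree (A i)) ∧
  ∀ i : Fin n, (i : ℕ) + 1 ≠ n →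
    ∀ x ∈ A i, ∀ y ∈ A i, q < x + y → x + y - q ∉ A i

/-- The projection `π_{a,b}`: the unique element of `{b+1, …, a+b}` congruent
to `x` modulo `a` (for `a > b ≥ 1`). -/
def wsProj (a b x : ℕ) : ℕ := if x % a ≤ b then x % a + a else x % a

/-- A `b`-WS-template with width `a` and `n` colors: a partition of
`{1, …, a+b}` into `n` subsets, each weakly sum-free, each sum-free outside
`{1, …, b}`, the last (special) subset satisfying: if `x, y` belong to it and
`x + y > b + 2a` then `x + y - 2a` does not belong to it, and every other
subset satisfying: if `x, y` belong to it and `x + y > a + b` then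
`π_{a,b}(x + y)` does not belong to it. -/
def IsWSTemplate {n : ℕ} (a b : ℕ) (A : Fin n → Set ℕ) : Prop :=
  IsPartition (a + b) A ∧
  (∀ i, WeaklySumFree (A i)) ∧
  (∀ i, SumFree (A i \ Set.Icc 1 b)) ∧
  (∀ i : Fin n, (i : ℕ) + 1 = n →
    ∀ x ∈ A i, ∀ y ∈ A i, b + 2 * a < x + y → x + y - 2 * a ∉ A i) ∧
  (∀ i : Fin n, (i : ℕ) + 1 ≠ n →
    ∀ x ∈ A i, ∀ y ∈ A i, a + b < x + y → wsProj a b (x + y) ∉ A i)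

/-- The zero-based row of `z`. Truncated subtraction places all of `{0, …, b}` in row `0`. -/
def row (a b z : ℕ) : ℕ := (z - (b + 1)) / a

/-- The column of `z`: its offset from the start of its row. -/
def col (a b z : ℕ) : ℕ := z - row a b z * a

theorem cell_spec {a b z : ℕ} (ha : 0 < a) (hz : 0 < z) :
    z = row a b z * a + col a b z ∧ 0 < col a b z ∧ col a b z ≤ a + b ∧
      (row a b z = 0 ∨ b < col a b z) := by
  have h1 := Nat.div_add_mod' (z - (b + 1)) a
  have h2 := Nat.mod_lt (z - (b + 1)) ha
  change row a b z * a + _ = _ at h1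
  unfold col
  rcases Nat.lt_or_ge b z with h | h
  · omega
  · have h0 : row a b z = 0 := by
      unfold row
      rw [Nat.sub_eq_zero_of_le (by omega), Nat.zero_div]
    rw [h0, Nat.zero_mul]
    omega

theorem cell_unique {a b z r u : ℕ} (ha : 0 < a) (hz : z = r * a + u) (hu : u ≤ a + b)
    (h : r = 0 ∨ b < u) : row a b z = r ∧ col a b z = u := by
  have hr : row a b z = r := by
    unfold row
    rcases Nat.lt_or_ge b u with hb | hb
    · have : z - (b + 1) = (u - (b + 1)) + r * a := by omega
      rw [this, Nat.add_mul_div_right _ _ ha, Nat.div_eq_of_lt (by omega), Nat.zero_add]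
    · have h0 : r = 0 := by omega
      subst h0
      rw [Nat.sub_eq_zero_of_le (by omega), Nat.zero_div]
  refine ⟨hr, ?_⟩
  unfold col
  rw [hr]
  omega

section Addition

variable {a b x y : ℕ}

theorem cell_add_low (ha : 0 < a) (hx : 0 < x) (hy : 0 < y)
    (h : col a b x + col a b y ≤ a + b) :
    col a b (x + y) = col a b x + col a b y := by
  obtain ⟨ex, -, -, cx⟩ := cell_spec (b := b) ha hx
  obtain ⟨ey, -, -, cy⟩ := cell_spec (b := b) ha hy
  refine (cell_unique (r := row a b x + row a b y) ha ?_ h (by omega)).2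
  rw [Nat.add_mul]
  omega

theorem cell_add_mid (ha : 0 < a) (hx : 0 < x) (hy : 0 < y)
    (h : a + b < col a b x + col a b y) (h' : col a b x + col a b y ≤ b + 2 * a) :
    row a b (x + y) = row a b x + row a b y + 1 ∧
      col a b (x + y) = col a b x + col a b y - a := by
  obtain ⟨ex, -, -, -⟩ := cell_spec (b := b) ha hx
  obtain ⟨ey, -, -, -⟩ := cell_spec (b := b) ha hy
  refine cell_unique ha ?_ (by omega) (by omega)
  rw [Nat.add_mul, Nat.add_mul]
  omega

theorem cell_add_high (hba : b < a) (hx : 0 < x) (hy : 0 < y)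
    (h : b + 2 * a < col a b x + col a b y) :
    col a b (x + y) = col a b x + col a b y - 2 * a := by
  have ha : 0 < a := by omega
  obtain ⟨ex, -, lx, -⟩ := cell_spec (b := b) ha hx
  obtain ⟨ey, -, ly, -⟩ := cell_spec (b := b) ha hy
  refine (cell_unique (r := row a b x + row a b y + 2) ha ?_ (by omega) (by omega)).2
  rw [Nat.add_mul, Nat.add_mul]
  omega

end Addition

/-- `wsProj a b` picks out the representative in `{b + 1, …, a + b}` of a class modulo `a`. -/
theorem wsProj_eq {a b w : ℕ} (m : ℕ) (hba : b < a) (h : b < w) (h' : w ≤ a + b) :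
    wsProj a b (w + m * a) = w := by
  unfold wsProj
  rw [Nat.add_mul_mod_self_right]
  rcases Nat.lt_or_ge w a with hw | hw
  · rw [Nat.mod_eq_of_lt hw, if_neg (by omega)]
  · rw [Nat.mod_eq_sub_mod hw, Nat.mod_eq_of_lt (by omega), if_pos (by omega)]
    omega

/-- When two columns add up to more than `a + b`, the column of a sum is the projection of the sum of the
columns. -/
theorem col_add_eq_wsProj {a b x y : ℕ} (hba : b < a) (hx : 0 < x) (hy : 0 < y)
    (h : a + b < col a b x + col a b y) :
    col a b (x + y) = wsProj a b (col a b x + col a b y) := by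
  have ha : 0 < a := by omega
  obtain ⟨-, -, lx, -⟩ := cell_spec (b := b) ha hx
  obtain ⟨-, -, ly, -⟩ := cell_spec (b := b) ha hy
  rcases Nat.lt_or_ge (b + 2 * a) (col a b x + col a b y) with h2 | h2
  · rw [cell_add_high hba hx hy h2]
    have := wsProj_eq (w := col a b x + col a b y - 2 * a) 2 hba (by omega) (by omega)
    rw [Nat.sub_add_cancel (by omega)] at this
    exact this.symm
  · rw [(cell_add_mid ha hx hy h h2).2]
    have := wsProj_eq (w := col a b x + col a b y - a) 1 hba (by omega) (by omega)
    rw [Nat.one_mul, Nat.sub_add_cancel (by omega)] at this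
    exact this.symm

/-- The case `u + v ≤ a + b`, common to the ordinary and special colours. -/
theorem col_add_notMem_of_low {a b x y : ℕ} {S : Set ℕ} (ha : 0 < a) (hw : WeaklySumFree S)
    (hs : SumFree (S \ Set.Icc 1 b)) (hx : 0 < x) (hy : 0 < y) (hxy : x ≠ y)
    (hxS : col a b x ∈ S) (hyS : col a b y ∈ S) (h : col a b x + col a b y ≤ a + b) :
    col a b (x + y) ∉ S := by
  rw [cell_add_low ha hx hy h]
  by_cases huv : col a b x = col a b y
  · obtain ⟨ex, -, -, cx⟩ := cell_spec (b := b) ha hx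
    obtain ⟨ey, -, -, cy⟩ := cell_spec (b := b) ha hy
    have hb : b < col a b x := by
      by_contra hb
      have rx : row a b x = 0 := by omega
      have ry : row a b y = 0 := by omega
      rw [rx] at ex
      rw [ry] at ey
      omega
    intro hS
    refine hs _ ⟨hxS, ?_⟩ _ ⟨hyS, ?_⟩ ⟨hS, ?_⟩ <;> rw [Set.mem_Icc] <;> omega
  · exact hw _ hxS _ hyS huv

/-- The extended colouring: column colour for the `n` ordinary template colours, and for the
special colour the colour of the one-based row index. -/
def extendColoring {n k : ℕ} (a b p : ℕ) (A : Fin (n + 1) → Set ℕ) (B : Fin k → Set ℕ) :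
    Fin (n + k) → Set ℕ :=
  Fin.addCases (motive := fun _ => Set ℕ)
    (fun i => {z | z ∈ Set.Icc 1 (p * a + b) ∧ col a b z ∈ A i.castSucc})
    (fun j => {z | z ∈ Set.Icc 1 (p * a + b) ∧ col a b z ∈ A (Fin.last n) ∧
      row a b z + 1 ∈ B j})

theorem row_lt {a b p z : ℕ} (ha : 0 < a) (hp : 0 < p) (hz : z ∈ Set.Icc 1 (p * a + b)) :
    row a b z < p := by
  rw [Set.mem_Icc] at hz
  have := Nat.mul_pos hp ha
  exact (Nat.div_lt_iff_lt_mul ha).2 (by omega)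

theorem isPartition_extendColoring {a n b p k : ℕ} (ha : 0 < a) (hp : 0 < p)
    {A : Fin (n + 1) → Set ℕ} (hA : IsPartition (a + b) A)
    {B : Fin k → Set ℕ} (hB : IsPartition p B) :
    IsPartition (p * a + b) (extendColoring a b p A B) := by
  constructor
  · intro i j
    refine Fin.addCases (fun i => ?_) (fun i => ?_) i <;>
      refine Fin.addCases (fun j => ?_) (fun j => ?_) j <;>
      intro hij <;> rw [Set.disjoint_left] <;>
      simp only [extendColoring, Fin.addCases_left, Fin.addCases_right, Set.mem_ofPred_eq]
    · rintro z ⟨-, h1⟩ ⟨-, h2⟩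
      refine Set.disjoint_left.1 (hA.1 i.castSucc j.castSucc ?_) h1 h2
      intro h
      exact hij (by rw [Fin.castSucc_injective n h])
    · rintro z ⟨-, h1⟩ ⟨-, h2, -⟩
      exact Set.disjoint_left.1 (hA.1 _ _ (Fin.castSucc_lt_last i).ne) h1 h2
    · rintro z ⟨-, h1, -⟩ ⟨-, h2⟩
      exact Set.disjoint_left.1 (hA.1 _ _ (Fin.castSucc_lt_last j).ne') h1 h2
    · rintro z ⟨-, -, h1⟩ ⟨-, -, h2⟩
      refine Set.disjoint_left.1 (hB.1 i j ?_) h1 h2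
      rintro rfl
      exact hij rfl
  · apply Set.Subset.antisymm
    · refine Set.iUnion_subset fun i => ?_
      refine Fin.addCases (fun i => ?_) (fun i => ?_) i <;> intro z <;>
        simp only [extendColoring, Fin.addCases_left, Fin.addCases_right, Set.mem_ofPred_eq]
      · exact fun h => h.1
      · exact fun h => h.1
    · intro z hz
      rw [Set.mem_iUnion]
      obtain ⟨-, h1, h2, -⟩ := cell_spec (b := b) ha (Set.mem_Icc.1 hz).1
      have hc : col a b z ∈ ⋃ i, A i := by
        rw [hA.2]
        exact ⟨h1, h2⟩
      have hr : row a b z + 1 ∈ ⋃ i, B i := by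
        rw [hB.2]
        exact ⟨by omega, row_lt ha hp hz⟩
      obtain ⟨i, hi⟩ := Set.mem_iUnion.1 hc
      obtain ⟨j, hj⟩ := Set.mem_iUnion.1 hr
      induction i using Fin.lastCases with
      | last =>
        refine ⟨Fin.natAdd n j, ?_⟩
        simp only [extendColoring, Fin.addCases_right]
        exact ⟨hz, hi, hj⟩
      | cast i =>
        refine ⟨Fin.castAdd k i, ?_⟩
        simp only [extendColoring, Fin.addCases_left]
        exact ⟨hz, hi⟩

/-- Theorem 3.17: a `b`-WS-template with width `a` and `n+1` colors (special
subset the last one) and a sum-free `k`-partition of `{1, …, p}` yield a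
weakly sum-free `(n+k)`-partition of `{1, …, pa + b}`. -/
theorem wstemplate_extension (a n b p k : ℕ) (ha : 0 < a) (hn : 0 < n)
    (hb : 0 < b) (hp : 0 < p) (hk : 0 < k) (hba : b < a)
    (A : Fin (n + 1) → Set ℕ) (hA : IsWSTemplate a b A)
    (B : Fin k → Set ℕ) (hB : IsPartition p B) (hBsf : ∀ i, SumFree (B i)) :
    ∃ C : Fin (n + k) → Set ℕ,
      IsPartition (p * a + b) C ∧ ∀ i, WeaklySumFree (C i) := by
  obtain ⟨hAp, hAw, hAs, hAspec, hAord⟩ := hA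
  refine ⟨extendColoring a b p A B, isPartition_extendColoring ha hp hAp hB, fun i => ?_⟩
  refine Fin.addCases (fun i => ?_) (fun j => ?_) i <;> intro x hx y hy hxy hz <;>
    simp only [extendColoring, Fin.addCases_left, Fin.addCases_right, Set.mem_ofPred_eq]
      at hx hy hz
  · obtain ⟨⟨hx0, -⟩, hxA⟩ := hx
    obtain ⟨⟨hy0, -⟩, hyA⟩ := hy
    rcases Nat.lt_or_ge (a + b) (col a b x + col a b y) with h | h
    · refine hAord i.castSucc ?_ _ hxA _ hyA h ?_
      · have := i.isLt
        simp only [Fin.val_castSucc]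
        omega
      · rw [← col_add_eq_wsProj hba hx0 hy0 h]
        exact hz.2
    · exact col_add_notMem_of_low ha (hAw _) (hAs _) hx0 hy0 hxy hxA hyA h hz.2
  · obtain ⟨⟨hx0, -⟩, hxA, hxB⟩ := hx
    obtain ⟨⟨hy0, -⟩, hyA, hyB⟩ := hy
    obtain ⟨-, hzA, hzB⟩ := hz
    rcases Nat.lt_or_ge (a + b) (col a b x + col a b y) with h | h
    · rcases Nat.lt_or_ge (b + 2 * a) (col a b x + col a b y) with h2 | h2
      · refine hAspec (Fin.last n) (by simp) _ hxA _ hyA h2 ?_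
        rw [← cell_add_high hba hx0 hy0 h2]
        exact hzA
      · refine hBsf j _ hxB _ hyB ?_
        rw [(cell_add_mid ha hx0 hy0 h h2).1] at hzB
        convert hzB using 1
        omega
    · exact col_add_notMem_of_low ha (hAw _) (hAs _) hx0 hy0 hxy hxA hyA h hzA
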